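/- Let d be an odd prime and let G ∈ C_3^2 be a simplified two-qudit third-level gate. Then there exists a Clifford gate C ∈ C_2^2 such that GC is again a simplified two-qudit third-level gate and (GC) Z₁ (GC)* is a Pauli gate (equivalently, in the expression (GC)Z₁(GC)* = D_{Φ'₁}P'₁ with P'₁ Pauli, one may take Φ'₁ to be the zero matrix). -/

import Mathlib

open Matrix

noncomputable section

/-- The space of `n`-qudit gates: `d^n × d^n` complex matrices indexed by `(ZMod d)^n`. -/
abbrev Mat (d n : ℕ) := Matrix (Fin n → ZMod d) (Fin n → ZMod d) ℂ

/-- The primitive `d`-th root of unity `ω = exp(2πi/d)`. -/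
def omega (d : ℕ) : ℂ := Complex.exp (2 * Real.pi * Complex.I / d)

/-- `ω` raised to the canonical integer lift of `c : ZMod d`. -/
def omegaPow (d : ℕ) (c : ZMod d) : ℂ := omega d ^ c.val

/-- The Pauli gate `Z^p`, acting by `Z^p |z⟩ = ω^(p·z) |z⟩`. -/
def ZP (d n : ℕ) [NeZero d] (p : Fin n → ZMod d) : Mat d n :=
  Matrix.diagonal fun z => omegaPow d (p ⬝ᵥ z)

/-- The Pauli gate `X^q`, acting by `X^q |z⟩ = |z + q⟩`. -/
def XQ (d n : ℕ) [NeZero d] (q : Fin n → ZMod d) : Mat d n :=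
  Matrix.of fun z' z => if z' = z + q then 1 else 0

/-- The basic Pauli gate `Z_i`. -/
def Zi (d n : ℕ) [NeZero d] (i : Fin n) : Mat d n := ZP d n (Pi.single i 1)

/-- The basic Pauli gate `X_i`. -/
def Xi (d n : ℕ) [NeZero d] (i : Fin n) : Mat d n := XQ d n (Pi.single i 1)

/-- The Pauli group `C_1^n`. -/
def Pauli (d n : ℕ) [NeZero d] : Set (Mat d n) :=
  { M | ∃ (c : ZMod d) (p q : Fin n → ZMod d), M = omegaPow d c • (ZP d n p * XQ d n q) }

/-- The Clifford group `C_2^n`. -/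
def Clifford (d n : ℕ) [NeZero d] : Set (Mat d n) :=
  { C | C ∈ Matrix.unitaryGroup (Fin n → ZMod d) ℂ ∧ ∀ P ∈ Pauli d n, C * P * Cᴴ ∈ Pauli d n }

/-- The third level `C_3^n` of the Clifford hierarchy. -/
def Third (d n : ℕ) [NeZero d] : Set (Mat d n) :=
  { G | G ∈ Matrix.unitaryGroup (Fin n → ZMod d) ℂ ∧ ∀ P ∈ Pauli d n, G * P * Gᴴ ∈ Clifford d n }

/-- The quadratic diagonal gate `D_Φ |z⟩ = ω^(zᵀ Φ z) |z⟩`. -/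
def quadGate (d n : ℕ) [NeZero d] (Φ : Matrix (Fin n) (Fin n) (ZMod d)) : Mat d n :=
  Matrix.diagonal fun z => omegaPow d (z ⬝ᵥ (Φ *ᵥ z))

/-- A gate is semi-Clifford if it is `C₁ D C₂` for Cliffords `C₁, C₂` and a
diagonal third-level gate `D`. -/
def SemiClifford (d n : ℕ) [NeZero d] (G : Mat d n) : Prop :=
  ∃ C₁ ∈ Clifford d n, ∃ C₂ ∈ Clifford d n, ∃ D ∈ Third d n, D.IsDiag ∧ G = C₁ * D * C₂

/-- A Clifford gate is almost diagonal if it is `D_Φ P` for symmetric `Φ` and Pauli `P`. -/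
def AlmostDiag (d n : ℕ) [NeZero d] (M : Mat d n) : Prop :=
  ∃ Φ : Matrix (Fin n) (Fin n) (ZMod d), Φ.IsSymm ∧ ∃ P ∈ Pauli d n, M = quadGate d n Φ * P

/-- A third-level gate is simplified if its conjugate tuple consists of
almost diagonal Clifford gates. -/
def Simplified (d n : ℕ) [NeZero d] (G : Mat d n) : Prop :=
  ∀ i : Fin n, AlmostDiag d n (G * Zi d n i * Gᴴ) ∧ AlmostDiag d n (G * Xi d n i * Gᴴ)

/-- The symplectic product on `(ZMod d)⁴`. -/
def symp4 (d : ℕ) (u v : Fin 4 → ZMod d) : ZMod d :=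
  u 0 * v 1 - u 1 * v 0 + u 2 * v 3 - u 3 * v 2

/-!
Conjugation by a simplified unitary gate `G` sends the Pauli gate `Z^p X^q` to some `D_Φ P`, and
multiplying two such gates adds their quadratic parts. The attainable pairs `((p, q), Φ)` therefore
form a linear relation between the `2n`-dimensional phase space and the `n(n+1)/2`-dimensional space
of symmetric matrices, defined on all of phase space. For `n ≤ 2` the former dimension exceeds the
latter, so some `v ≠ 0` is related to `Φ = 0`: `G` conjugates the Pauli gate of `v` to a Pauli gate.
Symplectic shears (conjugation by `D_Φ`) and the Fourier gate move any nonzero point of phase space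
to any other, so a Clifford gate `C` conjugates `Z₁` to the Pauli gate of `v` up to phase.
-/

section LinearAlgebra

variable {ι K : Type*}

/-- The space of symmetric matrices, where the quadratic parts `Φ` of the gates `D_Φ P` live. -/
def symmetricMatrices (ι K : Type*) [Semiring K] : Submodule K (Matrix ι ι K) where
  carrier := {Φ | Φ.IsSymm}
  add_mem' := IsSymm.add
  zero_mem' := isSymm_zero
  smul_mem' c _ hΦ := hΦ.smul c

/-- The identification of symmetric matrices with functions on unordered pairs of indices. -/
def symmetricMatricesEquivSym2 [Semiring K] : symmetricMatrices ι K ≃ₗ[K] (Sym2 ι → K) where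
  toFun Φ := Sym2.lift ⟨Φ.1, fun i j => Φ.2.apply j i⟩
  invFun f := ⟨of fun i j => f s(i, j), IsSymm.ext fun i j => by
    simp only [of_apply, Sym2.eq_swap]⟩
  map_add' Φ Ψ := funext <| Sym2.ind fun _ _ => rfl
  map_smul' c Φ := funext <| Sym2.ind fun _ _ => rfl
  left_inv Φ := rfl
  right_inv f := funext <| Sym2.ind fun _ _ => rfl

theorem finrank_symmetricMatrices [Semiring K] [StrongRankCondition K] [Fintype ι] :
    Module.finrank K (symmetricMatrices ι K) = (Fintype.card ι + 1).choose 2 := by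
  classical
  rw [symmetricMatricesEquivSym2.finrank_eq, Module.finrank_fintype_fun_eq_card, Sym2.card]

theorem exists_mem_symmetricMatrices_mulVec_eq [Field K] [Fintype ι] {q : ι → K} (hq : q ≠ 0)
    (v : ι → K) : ∃ Φ ∈ symmetricMatrices ι K, Φ *ᵥ q = v := by
  classical
  obtain ⟨j, hj⟩ := Function.ne_iff.mp hq
  let u : ι → K := Pi.single j (q j)⁻¹
  have huq : u ⬝ᵥ q = 1 := by rw [single_dotProduct, inv_mul_cancel₀ hj]
  refine ⟨vecMulVec v u + vecMulVec u v - (v ⬝ᵥ q) • vecMulVec u u, ?_, ?_⟩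
  · refine IsSymm.sub ?_ (IsSymm.smul (transpose_vecMulVec u u) _)
    rw [IsSymm, transpose_add, transpose_vecMulVec, transpose_vecMulVec, add_comm]
  · simp [sub_mulVec, add_mulVec, smul_mulVec, vecMulVec_mulVec, huq]

theorem exists_ne_zero_mk_zero_mem [DivisionRing K] {V W : Type*} [AddCommGroup V] [Module K V]
    [AddCommGroup W] [Module K W] [FiniteDimensional K W]
    {S : Submodule K (V × W)} (hS : S.map (LinearMap.fst K V W) = ⊤)
    (hVW : Module.finrank K W < Module.finrank K V) : ∃ v ≠ 0, (v, (0 : W)) ∈ S := by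
  have : FiniteDimensional K V := .of_finrank_pos (hVW.trans_le' (Nat.zero_le _))
  have hVS : Module.finrank K V ≤ Module.finrank K S := by
    rw [← finrank_top K V, ← hS]
    exact Submodule.finrank_map_le _ _
  have hker : LinearMap.ker (LinearMap.snd K V W ∘ₗ S.subtype) ≠ ⊥ :=
    LinearMap.ker_ne_bot_of_finrank_lt (hVW.trans_le hVS)
  obtain ⟨⟨⟨v, w⟩, hvw⟩, hw, hne⟩ := Submodule.exists_mem_ne_zero_of_ne_bot hker
  obtain rfl : w = 0 := hw
  exact ⟨v, fun hv => hne (by simp [hv]), hvw⟩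

end LinearAlgebra

section RootOfUnity

variable {d : ℕ} [NeZero d]

theorem omegaPow_eq_stdAddChar (c : ZMod d) : omegaPow d c = ZMod.stdAddChar c := by
  rw [ZMod.stdAddChar_apply, ZMod.toCircle_apply, omegaPow, omega, ← Complex.exp_nat_mul]
  ring_nf

theorem omegaPow_zero : omegaPow d 0 = 1 := by
  rw [omegaPow_eq_stdAddChar, AddChar.map_zero_eq_one]

theorem omegaPow_add (a b : ZMod d) : omegaPow d (a + b) = omegaPow d a * omegaPow d b := by
  simp only [omegaPow_eq_stdAddChar, AddChar.map_add_eq_mul]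

theorem star_omegaPow (a : ZMod d) : star (omegaPow d a) = omegaPow d (-a) := by
  simp only [omegaPow_eq_stdAddChar, AddChar.map_neg_eq_conj, starRingEnd_apply]

theorem omegaPow_mem_unitary (c : ZMod d) : omegaPow d c ∈ unitary ℂ := by
  rw [Unitary.mem_iff_self_mul_star, star_omegaPow, ← omegaPow_add, add_neg_cancel, omegaPow_zero]

theorem sum_omegaPow_dotProduct {n : ℕ} (a : Fin n → ZMod d) :
    ∑ z, omegaPow d (a ⬝ᵥ z) = if a = 0 then (d : ℂ) ^ n else 0 := by
  let ψ : AddChar (Fin n → ZMod d) ℂ :=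
    ZMod.stdAddChar.compAddMonoidHom (dotProductBilin (ZMod d) (ZMod d) a).toAddMonoidHom
  have hψ : ψ = 0 ↔ a = 0 := by
    refine ⟨fun h => funext fun i => ZMod.injective_stdAddChar ?_, ?_⟩
    · simpa [ψ] using DFunLike.congr_fun h (Pi.single i 1)
    · rintro rfl
      ext z
      simp [ψ]
  calc ∑ z, omegaPow d (a ⬝ᵥ z) = ∑ z, ψ z := by simp only [omegaPow_eq_stdAddChar]; rfl
    _ = if a = 0 then (d : ℂ) ^ n else 0 := by simp [AddChar.sum_eq_ite, hψ, ZMod.card]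

end RootOfUnity

/-- The phase space `(ZMod d)ⁿ × (ZMod d)ⁿ`, whose points `(p, q)` are the exponents of the Pauli
gates `Z^p X^q`. -/
abbrev PhaseSpace (d n : ℕ) := (Fin n → ZMod d) × (Fin n → ZMod d)

/-- The phaseless Pauli gate `Z^p X^q` attached to the point `(p, q)` of phase space. -/
def pauliGate (d n : ℕ) [NeZero d] (v : PhaseSpace d n) : Mat d n := ZP d n v.1 * XQ d n v.2

section PauliGates

variable {d n : ℕ} [NeZero d]

theorem pauliGate_apply (v : PhaseSpace d n) (x z : Fin n → ZMod d) :
    pauliGate d n v x z = if x = z + v.2 then omegaPow d (v.1 ⬝ᵥ x) else 0 := by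
  simp [pauliGate, ZP, XQ, diagonal_mul]

theorem mul_pauliGate_apply (M : Mat d n) (v : PhaseSpace d n) (x z : Fin n → ZMod d) :
    (M * pauliGate d n v) x z = M x (z + v.2) * omegaPow d (v.1 ⬝ᵥ (z + v.2)) := by
  simp [mul_apply, pauliGate_apply]

theorem pauliGate_mul_apply (v : PhaseSpace d n) (M : Mat d n) (x z : Fin n → ZMod d) :
    (pauliGate d n v * M) x z = omegaPow d (v.1 ⬝ᵥ x) * M (x - v.2) z := by
  simp [mul_apply, pauliGate_apply, ← sub_eq_iff_eq_add]

theorem pauliGate_zero : pauliGate d n 0 = 1 := by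
  ext x z
  simp [pauliGate_apply, one_apply, omegaPow_zero]

theorem pauliGate_mul_pauliGate (v w : PhaseSpace d n) :
    pauliGate d n v * pauliGate d n w =
      omegaPow d (-(w.1 ⬝ᵥ v.2)) • pauliGate d n (v + w) := by
  ext x z
  rw [pauliGate_mul_apply, Matrix.smul_apply, pauliGate_apply, pauliGate_apply, smul_eq_mul,
    mul_ite, mul_ite, mul_zero, mul_zero, ← omegaPow_add, ← omegaPow_add]
  refine if_congr ?_ ?_ rfl
  · rw [sub_eq_iff_eq_add, add_assoc, Prod.snd_add, add_comm w.2]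
  · rw [Prod.fst_add, add_dotProduct, dotProduct_sub]
    ring_nf

theorem conjTranspose_pauliGate (v : PhaseSpace d n) :
    (pauliGate d n v)ᴴ = omegaPow d (-(v.1 ⬝ᵥ v.2)) • pauliGate d n (-v) := by
  ext x z
  rw [conjTranspose_apply, Matrix.smul_apply, pauliGate_apply, pauliGate_apply, smul_eq_mul,
    apply_ite star, star_zero, mul_ite, mul_zero, star_omegaPow, ← omegaPow_add]
  have hxz : z = x + v.2 ↔ x = z + (-v).2 := by
    rw [Prod.snd_neg, ← sub_eq_add_neg, eq_sub_iff_add_eq, eq_comm]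
  by_cases h : z = x + v.2
  · rw [if_pos h, if_pos (hxz.mp h), h, dotProduct_add, Prod.fst_neg, neg_dotProduct]
    ring_nf
  · rw [if_neg h, if_neg (hxz.not.mp h)]

theorem pauliGate_mem_unitaryGroup (v : PhaseSpace d n) :
    pauliGate d n v ∈ unitaryGroup (Fin n → ZMod d) ℂ := by
  rw [mem_unitaryGroup_iff, star_eq_conjTranspose, conjTranspose_pauliGate, Matrix.mul_smul,
    pauliGate_mul_pauliGate, smul_smul, ← omegaPow_add, Prod.fst_neg, neg_dotProduct, neg_neg,
    neg_add_cancel, omegaPow_zero, one_smul, add_neg_cancel, pauliGate_zero]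

theorem pauliGate_mul_comm (v w : PhaseSpace d n) :
    pauliGate d n v * pauliGate d n w =
      omegaPow d (v.1 ⬝ᵥ w.2 - w.1 ⬝ᵥ v.2) • (pauliGate d n w * pauliGate d n v) := by
  rw [pauliGate_mul_pauliGate, pauliGate_mul_pauliGate, smul_smul, ← omegaPow_add, add_comm w v]
  ring_nf

theorem mem_pauli_iff {P : Mat d n} :
    P ∈ Pauli d n ↔ ∃ c v, P = omegaPow d c • pauliGate d n v :=
  ⟨fun ⟨c, p, q, h⟩ => ⟨c, (p, q), h⟩, fun ⟨c, v, h⟩ => ⟨c, v.1, v.2, h⟩⟩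

theorem pauliGate_mem_pauli (v : PhaseSpace d n) : pauliGate d n v ∈ Pauli d n :=
  mem_pauli_iff.mpr ⟨0, v, by rw [omegaPow_zero, one_smul]⟩

theorem one_mem_pauli : 1 ∈ Pauli d n :=
  pauliGate_zero (d := d) (n := n) ▸ pauliGate_mem_pauli 0

theorem omegaPow_smul_mem_pauli (c : ZMod d) {P : Mat d n} (hP : P ∈ Pauli d n) :
    omegaPow d c • P ∈ Pauli d n := by
  obtain ⟨a, v, rfl⟩ := mem_pauli_iff.mp hP
  exact mem_pauli_iff.mpr ⟨c + a, v, by rw [smul_smul, omegaPow_add]⟩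

theorem mul_mem_pauli {P Q : Mat d n} (hP : P ∈ Pauli d n) (hQ : Q ∈ Pauli d n) :
    P * Q ∈ Pauli d n := by
  obtain ⟨a, v, rfl⟩ := mem_pauli_iff.mp hP
  obtain ⟨b, w, rfl⟩ := mem_pauli_iff.mp hQ
  rw [Matrix.smul_mul, Matrix.mul_smul, pauliGate_mul_pauliGate]
  exact omegaPow_smul_mem_pauli a <| omegaPow_smul_mem_pauli b <|
    omegaPow_smul_mem_pauli _ (pauliGate_mem_pauli _)

theorem zi_eq_pauliGate (i : Fin n) : Zi d n i = pauliGate d n (Pi.single i 1, 0) := by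
  ext x z
  simp [Zi, ZP, pauliGate_apply, diagonal_apply]

theorem xi_eq_pauliGate (i : Fin n) : Xi d n i = pauliGate d n (0, Pi.single i 1) := by
  ext x z
  simp [Xi, XQ, pauliGate_apply, omegaPow_zero]

end PauliGates

section Conjugation

variable {m R : Type*} [Fintype m]

theorem conj_conj [NonUnitalSemiring R] [StarRing R] (G C A : Matrix m m R) :
    (G * C) * A * (G * C)ᴴ = G * (C * A * Cᴴ) * Gᴴ := by
  simp only [conjTranspose_mul, Matrix.mul_assoc]

variable [DecidableEq m] [CommRing R] [StarRing R] {G : Matrix m m R}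

theorem conj_mul_of_mem_unitaryGroup (hG : G ∈ unitaryGroup m R) (A B : Matrix m m R) :
    G * (A * B) * Gᴴ = (G * A * Gᴴ) * (G * B * Gᴴ) :=
  map_mul (Unitary.conjStarAlgAut R (Matrix m m R) ⟨G, hG⟩) A B

theorem conj_eq_of_mul_eq_mul (hG : G ∈ unitaryGroup m R) {A B : Matrix m m R}
    (h : G * A = B * G) : G * A * Gᴴ = B := by
  rw [h, Matrix.mul_assoc, ← star_eq_conjTranspose, mem_unitaryGroup_iff.mp hG, Matrix.mul_one]

end Conjugation

section Clifford

variable {d n : ℕ} [NeZero d]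

theorem mem_clifford_of_mul_pauliGate {C : Mat d n}
    (hC : C ∈ unitaryGroup (Fin n → ZMod d) ℂ)
    (h : ∀ v, ∃ c w, C * pauliGate d n v = (omegaPow d c • pauliGate d n w) * C) :
    C ∈ Clifford d n := by
  refine ⟨hC, fun P hP => ?_⟩
  obtain ⟨a, v, rfl⟩ := mem_pauli_iff.mp hP
  obtain ⟨c, w, hvw⟩ := h v
  rw [Matrix.mul_smul, Matrix.smul_mul, conj_eq_of_mul_eq_mul hC hvw]
  exact omegaPow_smul_mem_pauli a (omegaPow_smul_mem_pauli c (pauliGate_mem_pauli w))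

theorem mul_mem_clifford {C D : Mat d n} (hC : C ∈ Clifford d n) (hD : D ∈ Clifford d n) :
    C * D ∈ Clifford d n :=
  ⟨mul_mem hC.1 hD.1, fun P hP => conj_conj C D P ▸ hC.2 _ (hD.2 P hP)⟩

theorem pauli_subset_clifford : Pauli d n ⊆ Clifford d n := fun P hP => by
  obtain ⟨c, v, rfl⟩ := mem_pauli_iff.mp hP
  have hunitary : omegaPow d c • pauliGate d n v ∈ unitaryGroup (Fin n → ZMod d) ℂ :=
    Unitary.smul_mem_of_mem (omegaPow_mem_unitary c) (pauliGate_mem_unitaryGroup v)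
  refine mem_clifford_of_mul_pauliGate hunitary fun w =>
    ⟨v.1 ⬝ᵥ w.2 - w.1 ⬝ᵥ v.2, w, ?_⟩
  rw [Matrix.smul_mul, pauliGate_mul_comm, Matrix.smul_mul, Matrix.mul_smul, smul_comm]

end Clifford

section QuadraticGates

variable {d n : ℕ} [NeZero d]

theorem quadGate_zero : quadGate d n 0 = 1 := by
  simp [quadGate, omegaPow_zero]

theorem quadGate_mul_quadGate (Φ Ψ : Matrix (Fin n) (Fin n) (ZMod d)) :
    quadGate d n Φ * quadGate d n Ψ = quadGate d n (Φ + Ψ) := by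
  simp only [quadGate, diagonal_mul_diagonal, add_mulVec, dotProduct_add, omegaPow_add]

theorem conjTranspose_quadGate (Φ : Matrix (Fin n) (Fin n) (ZMod d)) :
    (quadGate d n Φ)ᴴ = quadGate d n (-Φ) := by
  rw [quadGate, quadGate, diagonal_conjTranspose]
  simp only [Pi.star_def, star_omegaPow, neg_mulVec, dotProduct_neg]

theorem quadGate_mem_unitaryGroup (Φ : Matrix (Fin n) (Fin n) (ZMod d)) :
    quadGate d n Φ ∈ unitaryGroup (Fin n → ZMod d) ℂ := by
  rw [mem_unitaryGroup_iff, star_eq_conjTranspose, conjTranspose_quadGate, quadGate_mul_quadGate,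
    add_neg_cancel, quadGate_zero]

theorem quadGate_mul_pauliGate {Φ : Matrix (Fin n) (Fin n) (ZMod d)} (hΦ : Φ.IsSymm)
    (v : PhaseSpace d n) :
    quadGate d n Φ * pauliGate d n v = (omegaPow d (-(v.2 ⬝ᵥ (Φ *ᵥ v.2))) •
      pauliGate d n (v.1 + 2 • (Φ *ᵥ v.2), v.2)) * quadGate d n Φ := by
  ext x z
  simp only [quadGate, diagonal_mul, mul_diagonal, Matrix.smul_apply, smul_eq_mul, pauliGate_apply]
  split_ifs with h
  · have hsymm : v.2 ⬝ᵥ (Φ *ᵥ z) = z ⬝ᵥ (Φ *ᵥ v.2) := by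
      rw [dotProduct_mulVec, ← mulVec_transpose, hΦ.eq, dotProduct_comm]
    rw [h, ← omegaPow_add, ← omegaPow_add, ← omegaPow_add]
    simp only [mulVec_add, dotProduct_add, add_dotProduct, smul_dotProduct, hsymm,
      dotProduct_comm (Φ *ᵥ v.2)]
    ring_nf
  · simp

theorem quadGate_mem_clifford {Φ : Matrix (Fin n) (Fin n) (ZMod d)} (hΦ : Φ.IsSymm) :
    quadGate d n Φ ∈ Clifford d n :=
  mem_clifford_of_mul_pauliGate (quadGate_mem_unitaryGroup Φ) fun v =>
    ⟨_, _, quadGate_mul_pauliGate hΦ v⟩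

theorem AlmostDiag.mem_clifford {M : Mat d n} (hM : AlmostDiag d n M) : M ∈ Clifford d n := by
  obtain ⟨Φ, hΦ, P, hP, rfl⟩ := hM
  exact mul_mem_clifford (quadGate_mem_clifford hΦ) (pauli_subset_clifford hP)

end QuadraticGates

/-- The `n`-qudit Fourier gate `|z⟩ ↦ d^(-n/2) ∑ₓ ω^(x·z) |x⟩`. -/
def fourierGate (d n : ℕ) : Mat d n :=
  of fun x z => ((√d : ℂ) ^ n)⁻¹ * omegaPow d (x ⬝ᵥ z)

section Fourier

variable {d n : ℕ} [NeZero d]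

theorem fourierGate_mem_unitaryGroup : fourierGate d n ∈ unitaryGroup (Fin n → ZMod d) ℂ := by
  have hd : (√d : ℂ) ^ n * (√d : ℂ) ^ n = (d : ℂ) ^ n := by
    rw [← mul_pow, ← Complex.ofReal_mul, Real.mul_self_sqrt (Nat.cast_nonneg d),
      Complex.ofReal_natCast]
  have hd0 : (d : ℂ) ^ n ≠ 0 := pow_ne_zero n (NeZero.ne (d : ℂ))
  have hterm (x y z : Fin n → ZMod d) : fourierGate d n x z * star (fourierGate d n y z) =
      ((d : ℂ) ^ n)⁻¹ * omegaPow d ((x - y) ⬝ᵥ z) := by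
    rw [fourierGate, of_apply, of_apply, star_mul', star_omegaPow, sub_dotProduct, sub_eq_add_neg,
      omegaPow_add, ← hd, mul_inv]
    simp only [star_inv₀, star_pow, RCLike.star_def, Complex.conj_ofReal]
    ring
  rw [mem_unitaryGroup_iff]
  ext x y
  simp only [mul_apply, star_apply, hterm, ← Finset.mul_sum, sum_omegaPow_dotProduct, sub_eq_zero,
    one_apply]
  split_ifs <;> simp [hd0]

theorem fourierGate_mul_pauliGate (v : PhaseSpace d n) :
    fourierGate d n * pauliGate d n v =
      (omegaPow d (v.1 ⬝ᵥ v.2) • pauliGate d n (v.2, -v.1)) * fourierGate d n := by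
  ext x z
  rw [Matrix.smul_mul, Matrix.smul_apply, mul_pauliGate_apply, pauliGate_mul_apply, fourierGate,
    of_apply, of_apply, sub_neg_eq_add, smul_eq_mul, dotProduct_add x, dotProduct_add v.1,
    add_dotProduct x, dotProduct_comm x v.2]
  simp only [omegaPow_add]
  ring

theorem fourierGate_mem_clifford : fourierGate d n ∈ Clifford d n :=
  mem_clifford_of_mul_pauliGate fourierGate_mem_unitaryGroup fun v =>
    ⟨_, _, fourierGate_mul_pauliGate v⟩

end Fourier

/-- Two points of phase space are Clifford conjugate if a Clifford gate conjugates the Pauli gate of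
the first to that of the second, up to a power of `ω`. -/
def CliffordConjugate (d n : ℕ) [NeZero d] (v w : PhaseSpace d n) : Prop :=
  ∃ C ∈ Clifford d n, ∃ c, C * pauliGate d n v * Cᴴ = omegaPow d c • pauliGate d n w

namespace CliffordConjugate

section

variable {d n : ℕ} [NeZero d]

theorem refl (v : PhaseSpace d n) : CliffordConjugate d n v v :=
  ⟨1, pauli_subset_clifford one_mem_pauli, 0, by simp [omegaPow_zero]⟩

theorem trans {u v w : PhaseSpace d n} (huv : CliffordConjugate d n u v)
    (hvw : CliffordConjugate d n v w) : CliffordConjugate d n u w := by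
  obtain ⟨C, hC, a, hCuv⟩ := huv
  obtain ⟨D, hD, b, hDvw⟩ := hvw
  refine ⟨D * C, mul_mem_clifford hD hC, a + b, ?_⟩
  rw [conj_conj, hCuv, Matrix.mul_smul, Matrix.smul_mul, hDvw, smul_smul, omegaPow_add]

theorem fourier (v : PhaseSpace d n) : CliffordConjugate d n v (v.2, -v.1) :=
  ⟨fourierGate d n, fourierGate_mem_clifford, _,
    conj_eq_of_mul_eq_mul fourierGate_mem_unitaryGroup (fourierGate_mul_pauliGate v)⟩

end

variable {d n : ℕ} [Fact d.Prime]

theorem shear (hodd : Odd d) {q : Fin n → ZMod d} (hq : q ≠ 0) (p p' : Fin n → ZMod d) :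
    CliffordConjugate d n (p, q) (p', q) := by
  have h2 : (2 : ZMod d) ≠ 0 := by
    rw [Ne, ← Nat.cast_two, ZMod.natCast_eq_zero_iff]
    intro hd
    exact hodd.ne_two_of_dvd_nat dvd_rfl ((Nat.prime_dvd_prime_iff_eq Fact.out Nat.prime_two).mp hd)
  obtain ⟨Φ, hΦ, hΦq⟩ := exists_mem_symmetricMatrices_mulVec_eq hq ((2 : ZMod d)⁻¹ • (p' - p))
  have hp' : p + 2 • (Φ *ᵥ q) = p' := by
    rw [hΦq, ← Nat.cast_smul_eq_nsmul (ZMod d), Nat.cast_two, smul_inv_smul₀ h2, add_sub_cancel]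
  have hconj :=
    conj_eq_of_mul_eq_mul (quadGate_mem_unitaryGroup Φ) (quadGate_mul_pauliGate hΦ (p, q))
  rw [hp'] at hconj
  exact ⟨quadGate d n Φ, quadGate_mem_clifford hΦ, _, hconj⟩

-- Shear, Fourier, shear: `v ↦ (-w.2, v.2) ↦ (v.2, w.2) ↦ w`.
theorem of_snd_ne_zero (hodd : Odd d) {v w : PhaseSpace d n} (hv : v.2 ≠ 0) (hw : w.2 ≠ 0) :
    CliffordConjugate d n v w := by
  have hfourier := fourier (-w.2, v.2)
  rw [neg_neg] at hfourier
  exact ((shear hodd hv v.1 (-w.2)).trans hfourier).trans (shear hodd hw v.2 w.1)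

theorem of_ne_zero (hodd : Odd d) {v w : PhaseSpace d n} (hv : v ≠ 0) (hw : w ≠ 0) :
    CliffordConjugate d n v w := by
  have hv' : ∃ v' : PhaseSpace d n, v'.2 ≠ 0 ∧ CliffordConjugate d n v v' := by
    by_cases hv₂ : v.2 = 0
    · exact ⟨_, neg_ne_zero.mpr fun hv₁ => hv (Prod.ext hv₁ hv₂), fourier v⟩
    · exact ⟨_, hv₂, refl v⟩
  have hw' : ∃ w' : PhaseSpace d n, w'.2 ≠ 0 ∧ CliffordConjugate d n w' w := by
    by_cases hw₂ : w.2 = 0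
    · refine ⟨(-w.2, w.1), fun hw₁ => hw (Prod.ext hw₁ hw₂), ?_⟩
      simpa using fourier (-w.2, w.1)
    · exact ⟨_, hw₂, refl w⟩
  obtain ⟨v', hv'₂, hvv'⟩ := hv'
  obtain ⟨w', hw'₂, hw'w⟩ := hw'
  exact (hvv'.trans (of_snd_ne_zero hodd hv'₂ hw'₂)).trans hw'w

end CliffordConjugate

/-- The gate `M` has the form `D_Φ P` with `P` a Pauli gate, so that it is almost diagonal with
quadratic part `Φ`. -/
def HasQuadraticPart (d n : ℕ) [NeZero d] (Φ : symmetricMatrices (Fin n) (ZMod d))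
    (M : Mat d n) : Prop :=
  ∃ P ∈ Pauli d n, M = quadGate d n Φ * P

section QuadraticPart

variable {d n : ℕ} [NeZero d]

theorem almostDiag_iff_exists_hasQuadraticPart {M : Mat d n} :
    AlmostDiag d n M ↔ ∃ Φ, HasQuadraticPart d n Φ M :=
  ⟨fun ⟨Φ, hΦ, h⟩ => ⟨⟨Φ, hΦ⟩, h⟩, fun ⟨Φ, h⟩ => ⟨Φ, Φ.2, h⟩⟩

theorem hasQuadraticPart_zero_iff {M : Mat d n} : HasQuadraticPart d n 0 M ↔ M ∈ Pauli d n := by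
  simp [HasQuadraticPart, quadGate_zero]

theorem exists_mul_quadGate_eq {Φ : Matrix (Fin n) (Fin n) (ZMod d)} (hΦ : Φ.IsSymm) {P : Mat d n}
    (hP : P ∈ Pauli d n) : ∃ Q ∈ Pauli d n, P * quadGate d n Φ = quadGate d n Φ * Q := by
  refine ⟨_, (quadGate_mem_clifford hΦ.neg).2 P hP, ?_⟩
  rw [conjTranspose_quadGate, neg_neg, ← Matrix.mul_assoc, ← Matrix.mul_assoc,
    quadGate_mul_quadGate, add_neg_cancel, quadGate_zero, Matrix.one_mul]

namespace HasQuadraticPart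

theorem omegaPow_smul {Φ : symmetricMatrices (Fin n) (ZMod d)} {M : Mat d n}
    (hM : HasQuadraticPart d n Φ M) (c : ZMod d) :
    HasQuadraticPart d n Φ (omegaPow d c • M) := by
  obtain ⟨P, hP, rfl⟩ := hM
  exact ⟨_, omegaPow_smul_mem_pauli c hP, (Matrix.mul_smul _ _ _).symm⟩

theorem mul {Φ Ψ : symmetricMatrices (Fin n) (ZMod d)} {M N : Mat d n}
    (hM : HasQuadraticPart d n Φ M) (hN : HasQuadraticPart d n Ψ N) :
    HasQuadraticPart d n (Φ + Ψ) (M * N) := by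
  obtain ⟨P, hP, rfl⟩ := hM
  obtain ⟨Q, hQ, rfl⟩ := hN
  obtain ⟨R, hR, hPR⟩ := exists_mul_quadGate_eq Ψ.2 hP
  refine ⟨R * Q, mul_mem_pauli hR hQ, ?_⟩
  calc quadGate d n Φ * P * (quadGate d n Ψ * Q)
      = quadGate d n Φ * (P * quadGate d n Ψ) * Q := by simp only [Matrix.mul_assoc]
    _ = quadGate d n (Φ + Ψ) * (R * Q) := by
      rw [hPR, ← quadGate_mul_quadGate]
      simp only [Matrix.mul_assoc]

end HasQuadraticPart

variable {G : Mat d n}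

theorem hasQuadraticPart_conj_pauliGate_zero (hG : G ∈ unitaryGroup (Fin n → ZMod d) ℂ) :
    HasQuadraticPart d n 0 (G * pauliGate d n 0 * Gᴴ) := by
  have hone : G * pauliGate d n 0 * Gᴴ = 1 :=
    conj_eq_of_mul_eq_mul hG (by rw [pauliGate_zero, Matrix.one_mul, Matrix.mul_one])
  rw [hone, hasQuadraticPart_zero_iff]
  exact one_mem_pauli

theorem HasQuadraticPart.conj_pauliGate_add (hG : G ∈ unitaryGroup (Fin n → ZMod d) ℂ)
    {v w : PhaseSpace d n} {Φ Ψ : symmetricMatrices (Fin n) (ZMod d)}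
    (hv : HasQuadraticPart d n Φ (G * pauliGate d n v * Gᴴ))
    (hw : HasQuadraticPart d n Ψ (G * pauliGate d n w * Gᴴ)) :
    HasQuadraticPart d n (Φ + Ψ) (G * pauliGate d n (v + w) * Gᴴ) := by
  have h := (hv.mul hw).omegaPow_smul (w.1 ⬝ᵥ v.2)
  rwa [← conj_mul_of_mem_unitaryGroup hG, pauliGate_mul_pauliGate, Matrix.mul_smul,
    Matrix.smul_mul, smul_smul, ← omegaPow_add, add_neg_cancel, omegaPow_zero, one_smul] at h

/-- The pairs `(v, Φ)` such that conjugation by the unitary gate `G` sends the Pauli gate of `v` to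
an almost diagonal gate with quadratic part `Φ`. It is kept as a relation, so that no quadratic part
has to be chosen. -/
def quadraticPartRelation (hG : G ∈ unitaryGroup (Fin n → ZMod d) ℂ) :
    Submodule (ZMod d) (PhaseSpace d n × symmetricMatrices (Fin n) (ZMod d)) :=
  let S : AddSubmonoid (PhaseSpace d n × symmetricMatrices (Fin n) (ZMod d)) :=
    { carrier := {x | HasQuadraticPart d n x.2 (G * pauliGate d n x.1 * Gᴴ)}
      zero_mem' := hasQuadraticPart_conj_pauliGate_zero hG
      add_mem' := HasQuadraticPart.conj_pauliGate_add hG }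
  { S with
    smul_mem' := fun c x hx => by
      rw [← ZMod.natCast_zmod_val c, Nat.cast_smul_eq_nsmul]
      exact nsmul_mem (S := S) hx c.val }

theorem mem_quadraticPartRelation {hG : G ∈ unitaryGroup (Fin n → ZMod d) ℂ}
    {v : PhaseSpace d n} {Φ : symmetricMatrices (Fin n) (ZMod d)} :
    (v, Φ) ∈ quadraticPartRelation hG ↔ HasQuadraticPart d n Φ (G * pauliGate d n v * Gᴴ) :=
  Iff.rfl

namespace Simplified

theorem map_fst_quadraticPartRelation (hs : Simplified d n G)
    (hG : G ∈ unitaryGroup (Fin n → ZMod d) ℂ) :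
    (quadraticPartRelation hG).map (LinearMap.fst (ZMod d) _ _) = ⊤ := by
  let b := (Pi.basisFun (ZMod d) (Fin n)).prod (Pi.basisFun (ZMod d) (Fin n))
  rw [eq_top_iff, ← b.span_eq, Submodule.span_le]
  rintro _ ⟨i | i, rfl⟩
  · obtain ⟨Φ, hΦ⟩ := almostDiag_iff_exists_hasQuadraticPart.mp (hs i).1
    rw [zi_eq_pauliGate] at hΦ
    exact ⟨(_, Φ), hΦ, by simp [b]⟩
  · obtain ⟨Φ, hΦ⟩ := almostDiag_iff_exists_hasQuadraticPart.mp (hs i).2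
    rw [xi_eq_pauliGate] at hΦ
    exact ⟨(_, Φ), hΦ, by simp [b]⟩

theorem almostDiag_conj (hs : Simplified d n G) (hG : G ∈ unitaryGroup (Fin n → ZMod d) ℂ)
    {P : Mat d n} (hP : P ∈ Pauli d n) : AlmostDiag d n (G * P * Gᴴ) := by
  obtain ⟨c, v, rfl⟩ := mem_pauli_iff.mp hP
  have hv : v ∈ (quadraticPartRelation hG).map (LinearMap.fst (ZMod d) _ _) :=
    hs.map_fst_quadraticPartRelation hG ▸ Submodule.mem_top
  obtain ⟨⟨_, Φ⟩, hΦ, rfl⟩ := hv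
  rw [Matrix.mul_smul, Matrix.smul_mul]
  exact almostDiag_iff_exists_hasQuadraticPart.mpr
    ⟨Φ, (mem_quadraticPartRelation.mp hΦ).omegaPow_smul c⟩

theorem mem_third (hs : Simplified d n G) (hG : G ∈ unitaryGroup (Fin n → ZMod d) ℂ) :
    G ∈ Third d n :=
  ⟨hG, fun _ hP => (hs.almostDiag_conj hG hP).mem_clifford⟩

theorem mul_clifford (hs : Simplified d n G) (hG : G ∈ unitaryGroup (Fin n → ZMod d) ℂ)
    {C : Mat d n} (hC : C ∈ Clifford d n) : Simplified d n (G * C) := by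
  have h {P : Mat d n} (hP : P ∈ Pauli d n) : AlmostDiag d n ((G * C) * P * (G * C)ᴴ) :=
    conj_conj G C P ▸ hs.almostDiag_conj hG (hC.2 P hP)
  intro i
  rw [zi_eq_pauliGate, xi_eq_pauliGate]
  exact ⟨h (pauliGate_mem_pauli _), h (pauliGate_mem_pauli _)⟩

end Simplified

end QuadraticPart

theorem Simplified.exists_ne_zero_conj_mem_pauli {d n : ℕ} [Fact d.Prime] {G : Mat d n}
    (hs : Simplified d n G) (hG : G ∈ unitaryGroup (Fin n → ZMod d) ℂ) (hn₀ : 0 < n) (hn : n ≤ 2) :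
    ∃ v ≠ 0, G * pauliGate d n v * Gᴴ ∈ Pauli d n := by
  have hdim : Module.finrank (ZMod d) (symmetricMatrices (Fin n) (ZMod d)) <
      Module.finrank (ZMod d) (PhaseSpace d n) := by
    rw [finrank_symmetricMatrices, Module.finrank_prod, Module.finrank_fin_fun, Fintype.card_fin]
    interval_cases n <;> decide
  obtain ⟨v, hv, hmem⟩ :=
    exists_ne_zero_mk_zero_mem (hs.map_fst_quadraticPartRelation hG) hdim
  exact ⟨v, hv, hasQuadraticPart_zero_iff.mp (mem_quadraticPartRelation.mp hmem)⟩

theorem stmt5_general {d n : ℕ} [Fact d.Prime] (hodd : Odd d) (hn : n ≤ 2) (i : Fin n)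
    {G : Mat d n} (hG : G ∈ unitaryGroup (Fin n → ZMod d) ℂ) (hs : Simplified d n G) :
    ∃ C ∈ Clifford d n, G * C ∈ Third d n ∧ Simplified d n (G * C) ∧
      (G * C) * Zi d n i * (G * C)ᴴ ∈ Pauli d n := by
  obtain ⟨v, hv, hGv⟩ := hs.exists_ne_zero_conj_mem_pauli hG i.pos hn
  have hsingle : ((Pi.single i 1, 0) : PhaseSpace d n) ≠ 0 := by simp
  obtain ⟨C, hC, c, hCv⟩ := CliffordConjugate.of_ne_zero hodd hsingle hv
  have hsGC : Simplified d n (G * C) := hs.mul_clifford hG hC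
  refine ⟨C, hC, hsGC.mem_third (mul_mem hG hC.1), hsGC, ?_⟩
  rw [conj_conj, zi_eq_pauliGate, hCv, Matrix.mul_smul, Matrix.smul_mul]
  exact omegaPow_smul_mem_pauli c hGv

/-- Every simplified two-qudit third-level gate `G` admits a Clifford correction `C`
such that `GC` is simplified and `(GC) Z₁ (GC)*` is a Pauli gate. -/
theorem stmt5 (d : ℕ) [NeZero d] (hp : Nat.Prime d) (hodd : Odd d)
    (G : Mat d 2) (hG : G ∈ Third d 2) (hs : Simplified d 2 G) :
    ∃ C ∈ Clifford d 2, G * C ∈ Third d 2 ∧ Simplified d 2 (G * C) ∧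
      (G * C) * Zi d 2 0 * (G * C)ᴴ ∈ Pauli d 2 := by
  have : Fact d.Prime := ⟨hp⟩
  exact stmt5_general hodd le_rfl 0 hG.1 hs

end
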